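/- arXiv:1711.11193 — 2 statements merged into one kernel-verified Lean document; each statement's English description precedes it below -/
import Mathlib

section
/- Fix m > 0, α > 0, 0 < R₁ < R₂ < R, P_T > 0, 𝒩 > 0, reflection coefficients 0 < ξ₂ ≤ ξ₁, κ = ξ₂/ξ₁, and a threshold γ > 0. Let X₁ = g₁²·r₁^{−2α} and X₂ = g₂²·r₂^{−2α} be independent, where g₁, g₂ have Gamma density m^m·g^{m−1}·e^{−m·g}/Γ(m), r₁ has density 2r/(R₂² − R₁²) on [R₁, R₂] and r₂ has density 2r/(R² − R₂²) on [R₂, R]. Let Φ^A, φ^A be the CDF and density of X₁ and Φ^B, φ^B the CDF and density of X₂, and define p₁ = P( [ξ₁X₁ ≥ ξ₂X₂ and P_Tξ₁X₁ ≥ γ(P_Tξ₂X₂ + 𝒩) and P_Tξ₂X₂ < γ𝒩] or [ξ₁X₁ < ξ₂X₂ and P_Tξ₂X₂ ≥ γ(P_Tξ₁X₁ + 𝒩) and P_Tξ₁X₁ < γ𝒩] ). Then p₁ = ∫_{0}^{𝒩γ/(P_Tξ₂)} (1 − Φ^A(γκx + 𝒩γ/(P_Tξ₁)))·φ^B(x)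 dx + ∫_{0}^{𝒩γ/(P_Tξ₁)} (1 − Φ^B(γx/κ + 𝒩γ/(P_Tξ₂)))·φ^A(x) dx. -/
open MeasureTheory Set Real

/-- The CDF `Φ(x) = P(g²·r^{−2α} < x)` of the composite variable, where `g` has Gamma
density `m^m g^{m−1} e^{−mg}/Γ(m)` on `(0,∞)` and `r` independently has density
`2r/(R_u² − R_l²)` on `[R_l, R_u]`, expressed as the double integral of the joint
density over the event. -/
noncomputable def compositeCDF (m α Rl Ru x : ℝ) : ℝ :=
  ∫ g in Set.Ioi (0 : ℝ), ∫ r in Rl..Ru,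
    if g ^ 2 * r ^ (-(2 * α)) < x
    then m ^ m * g ^ (m - 1) * Real.exp (-m * g) / Real.Gamma m *
      (2 * r / (Ru ^ 2 - Rl ^ 2)) else 0


open ProbabilityTheory in
lemma bc_law_eq (L : Measure ℝ) [IsProbabilityMeasure L] (h0 : L (Iic 0) = 0) (Φ φ : ℝ → ℝ)
    (hΦ : ∀ x, Φ x = L.real (Iio x)) (hφ : ∀ x, 0 < x → HasDerivAt Φ (φ x) x) :
    L = (volume.restrict (Ioi 0)).withDensity (fun x => ENNReal.ofReal (deriv Φ x)) := by
  have hmono : Monotone Φ := fun a b hab => by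
    rw [hΦ, hΦ]; exact measureReal_mono (Iio_subset_Iio hab)
  have hd0 : ∀ x, 0 ≤ deriv Φ x := fun x => hmono.deriv_nonneg
  have hd : ∀ x, 0 < x → HasDerivAt Φ (deriv Φ x) x := fun x hx =>
    (hφ x hx).differentiableAt.hasDerivAt
  have hz : ∀ x, x ≤ 0 → Φ x = 0 := fun x hx => by
    rw [hΦ, measureReal_def, measure_mono_null (s := Iio x) (t := Iic 0) (fun y (hy : y < x) => (hy.le.trans hx : y ≤ 0)) h0]
    rfl
  have hnn : ∀ x, 0 ≤ Φ x := fun x => by rw [hΦ]; positivity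
  have hc0 : ContinuousWithinAt Φ (Ici 0) 0 := by
    have h1 : ContinuousWithinAt (cdf L) (Ici 0) 0 := (cdf L).right_continuous 0
    have h2 : cdf L 0 = 0 := by rw [cdf_eq_real, measureReal_def, h0]; rfl
    unfold ContinuousWithinAt at *
    rw [h2] at h1
    rw [hz 0 le_rfl]
    refine tendsto_of_tendsto_of_tendsto_of_le_of_le tendsto_const_nhds h1 hnn ?_
    intro x
    simp only [cdf_eq_real, hΦ]
    exact measureReal_mono Iio_subset_Iic_self
  have hcont : ContinuousOn Φ (Ici 0) := by
    intro x hx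
    rcases (mem_Ici.1 hx).eq_or_lt with h | h
    · rw [← h]; exact hc0
    · exact (hd x h).continuousAt.continuousWithinAt
  refine Measure.ext_of_Ico _ _ fun a b hab => ?_
  have hΦm : ∀ x, Φ (max x 0) = Φ x := fun x => by
    rcases le_total x 0 with h | h
    · rw [max_eq_right h, hz x h, hz 0 le_rfl]
    · rw [max_eq_left h]
  have hab' : max a 0 ≤ max b 0 := max_le_max hab.le le_rfl
  have hL : L (Ico a b) = ENNReal.ofReal (Φ (max b 0) - Φ (max a 0)) := by
    rw [hΦm, hΦm, hΦ, hΦ, show Ico a b = Iio b \ Iio a by ext x; simp [and_comm], ← measureReal_diff (Iio_subset_Iio hab.le) measurableSet_Iio,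
      ofReal_measureReal]
  have hcc : ContinuousOn Φ (Icc (max a 0) (max b 0)) :=
    hcont.mono fun x hx => (le_max_right a 0).trans hx.1
  have hdd : ∀ x ∈ Ioo (max a 0) (max b 0), HasDerivAt Φ (deriv Φ x) x := fun x hx =>
    hd x ((le_max_right a 0).trans_lt hx.1)
  have hint := intervalIntegral.integrableOn_deriv_of_nonneg hcc hdd (fun x _ => hd0 x)
  have hI := intervalIntegral.integral_eq_sub_of_hasDerivAt_of_le hab' hcc hdd
    ((intervalIntegrable_iff_integrableOn_Ioc_of_le hab').2 hint)
  rw [hL, ← hI, intervalIntegral.integral_of_le hab',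
    ofReal_integral_eq_lintegral_ofReal hint (ae_of_all _ hd0),
    withDensity_apply _ measurableSet_Ico, Measure.restrict_restrict measurableSet_Ico]
  refine setLIntegral_congr ?_
  have e1 : (Ico a b ∩ Ioi 0 : Set ℝ) =ᵐ[volume] (Ioc a b ∩ Ioi 0 : Set ℝ) :=
    (Ico_ae_eq_Ioc).inter (ae_eq_refl _)
  have e2 : Ioc (max a 0) (max b 0) = Ioc a b ∩ Ioi 0 := ?_
  · rw [e2]; exact e1.symm
  ext x
  simp only [mem_Ioc, mem_inter_iff, mem_Ioi, max_lt_iff, le_max_iff]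
  constructor
  · rintro ⟨⟨h1, h2⟩, h3 | h3⟩
    · exact ⟨⟨h1, h3⟩, h2⟩
    · linarith
  · rintro ⟨⟨h1, h2⟩, h3⟩
    exact ⟨⟨h1, h3⟩, Or.inl h2⟩

lemma bc_law_int (L : Measure ℝ) [IsProbabilityMeasure L] (h0 : L (Iic 0) = 0) (Φ φ : ℝ → ℝ)
    (hΦ : ∀ x, Φ x = L.real (Iio x)) (hφ : ∀ x, 0 < x → HasDerivAt Φ (φ x) x)
    (H : ℝ → ℝ) (b : ℝ) (hb : 0 ≤ b) :
    ∫ x, (Iio b).indicator H x ∂L = ∫ x in (0:ℝ)..b, H x * φ x := by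
  have hmono : Monotone Φ := fun a b hab => by
    rw [hΦ, hΦ]; exact measureReal_mono (Iio_subset_Iio hab)
  have hd0 : ∀ x, 0 ≤ deriv Φ x := fun x => hmono.deriv_nonneg
  conv_lhs => rw [bc_law_eq L h0 Φ φ hΦ hφ]
  rw [integral_withDensity_eq_integral_toReal_smul (measurable_deriv Φ).ennreal_ofReal
    (ae_of_all _ fun x => ENNReal.ofReal_lt_top), intervalIntegral.integral_of_le hb,
    integral_Ioc_eq_integral_Ioo]
  have : ∀ x, (ENNReal.ofReal (deriv Φ x)).toReal • (Iio b).indicator H x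
      = (Iio b).indicator (fun x => H x * deriv Φ x) x := fun x => by
    rw [ENNReal.toReal_ofReal (hd0 x)]
    by_cases hx : x ∈ Iio b <;> simp [hx, mul_comm]
  simp_rw [this]
  rw [setIntegral_indicator measurableSet_Iio, Ioi_inter_Iio]
  refine setIntegral_congr_fun measurableSet_Ioo fun x hx => ?_
  simp only [(hφ x hx.1).deriv]

noncomputable def bcU (Rl Ru : ℝ) : Measure ℝ :=
  (volume.restrict (Ioc Rl Ru)).withDensity (fun r => ENNReal.ofReal (2 * r / (Ru ^ 2 - Rl ^ 2)))

noncomputable def bcG (m : ℝ) : Measure ℝ :=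
  (volume.restrict (Ioi 0)).withDensity
    (fun g => ENNReal.ofReal (m ^ m * g ^ (m - 1) * Real.exp (-m * g) / Real.Gamma m))

lemma bcG_eq (m : ℝ) : bcG m = ProbabilityTheory.gammaMeasure m m := by
  unfold bcG ProbabilityTheory.gammaMeasure
  rw [← withDensity_indicator measurableSet_Ioi]
  refine withDensity_congr_ae ?_
  filter_upwards [Measure.ae_ne volume (0:ℝ)] with x hx
  rw [ProbabilityTheory.gammaPDF_eq]
  rcases lt_or_gt_of_ne hx with h | h
  · simp [h.not_ge, h.not_gt]
  · simp only [mem_Ioi, h, indicator_of_mem, h.le, if_true]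
    congr 1
    rw [neg_mul]; ring

lemma bcG_prob (m : ℝ) (hm : 0 < m) : IsProbabilityMeasure (bcG m) := by
  rw [bcG_eq]; exact ProbabilityTheory.isProbabilityMeasure_gammaMeasure hm hm

lemma bcU_prob (Rl Ru : ℝ) (h0 : 0 < Rl) (h1 : Rl < Ru) : IsProbabilityMeasure (bcU Rl Ru) := by
  constructor
  have hpos : 0 < Ru ^ 2 - Rl ^ 2 := by nlinarith
  unfold bcU
  rw [withDensity_apply _ MeasurableSet.univ, Measure.restrict_univ,
    ← ofReal_integral_eq_lintegral_ofReal, ← intervalIntegral.integral_of_le h1.le]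
  · rw [intervalIntegral.integral_div, intervalIntegral.integral_const_mul, integral_id]
    rw [show 2 * ((Ru ^ 2 - Rl ^ 2) / 2) / (Ru ^ 2 - Rl ^ 2) = 1 by field_simp]
    simp
  · exact (Continuous.integrableOn_Ioc (by fun_prop))
  · refine (ae_restrict_iff' measurableSet_Ioc).2 (ae_of_all _ fun r hr => ?_)
    have : 0 < r := h0.trans hr.1
    show 0 ≤ 2 * r / (Ru ^ 2 - Rl ^ 2)
    positivity

lemma bcG_int (m : ℝ) (hm : 0 < m) (h : ℝ → ℝ) :
    ∫ g in Ioi (0:ℝ), (m ^ m * g ^ (m - 1) * Real.exp (-m * g) / Real.Gamma m) * h g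
      = ∫ g, h g ∂(bcG m) := by
  unfold bcG
  rw [integral_withDensity_eq_integral_toReal_smul (by fun_prop)
    (ae_of_all _ fun x => ENNReal.ofReal_lt_top)]
  refine setIntegral_congr_fun measurableSet_Ioi fun g hg => ?_
  have hg' : 0 < g := hg
  have := Real.Gamma_pos_of_pos hm
  simp only [smul_eq_mul]
  rw [ENNReal.toReal_ofReal (by positivity)]

lemma bcU_int (Rl Ru : ℝ) (h0 : 0 < Rl) (h1 : Rl < Ru) (h : ℝ → ℝ) :
    ∫ r in Rl..Ru, (2 * r / (Ru ^ 2 - Rl ^ 2)) * h r = ∫ r, h r ∂(bcU Rl Ru) := by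
  have hpos : 0 < Ru ^ 2 - Rl ^ 2 := by nlinarith
  unfold bcU
  rw [integral_withDensity_eq_integral_toReal_smul (by fun_prop)
    (ae_of_all _ fun x => ENNReal.ofReal_lt_top), intervalIntegral.integral_of_le h1.le]
  refine setIntegral_congr_fun measurableSet_Ioc fun r hr => ?_
  have : 0 < r := h0.trans hr.1
  simp only [smul_eq_mul]
  rw [ENNReal.toReal_ofReal (by positivity)]

noncomputable def bcL (m α Rl Ru : ℝ) : Measure ℝ :=
  ((bcG m).prod (bcU Rl Ru)).map (fun p => p.1 ^ 2 * p.2 ^ (-(2 * α)))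

lemma bcX_meas (α : ℝ) : Measurable (fun p : ℝ × ℝ => p.1 ^ 2 * p.2 ^ (-(2 * α))) := by
  fun_prop

lemma bcL_prob (m α Rl Ru : ℝ) (hm : 0 < m) (h0 : 0 < Rl) (h1 : Rl < Ru) :
    IsProbabilityMeasure (bcL m α Rl Ru) := by
  have := bcG_prob m hm
  have := bcU_prob Rl Ru h0 h1
  exact Measure.isProbabilityMeasure_map (bcX_meas α).aemeasurable

lemma bcL_zero (m α Rl Ru : ℝ) (hm : 0 < m) (h0 : 0 < Rl) (h1 : Rl < Ru) :
    bcL m α Rl Ru (Iic 0) = 0 := by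
  have := bcG_prob m hm
  have := bcU_prob Rl Ru h0 h1
  have hG : bcG m (Iic 0) = 0 := by
    unfold bcG
    rw [withDensity_apply _ measurableSet_Iic, Measure.restrict_restrict measurableSet_Iic]
    have : Iic (0:ℝ) ∩ Ioi 0 = ∅ := by
      ext x; simp
    rw [this]; simp
  have hU : bcU Rl Ru (Iic 0) = 0 := by
    unfold bcU
    rw [withDensity_apply _ measurableSet_Iic, Measure.restrict_restrict measurableSet_Iic]
    have : Iic 0 ∩ Ioc Rl Ru = ∅ := by
      ext x; simp only [mem_inter_iff, mem_Iic, mem_Ioc, mem_empty_iff_false, iff_false]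
      rintro ⟨a, b, c⟩; linarith
    simp [this]
  unfold bcL
  rw [Measure.map_apply (bcX_meas α) measurableSet_Iic]
  refine measure_mono_null (t := (Iic 0 ×ˢ univ) ∪ (univ ×ˢ Iic 0)) ?_ ?_
  · rintro ⟨g, r⟩ h
    by_contra hc
    simp only [mem_union, mem_prod, mem_Iic, mem_univ, and_true, true_and, not_or, not_le] at hc
    have h' : g ^ 2 * r ^ (-(2 * α)) ≤ 0 := h
    have : 0 < r := hc.2
    have : 0 < g := hc.1
    have : 0 < g ^ 2 * r ^ (-(2 * α)) := by positivity
    linarith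
  · refine measure_union_null ?_ ?_ <;> rw [Measure.prod_prod] <;> simp [hG, hU]

lemma bcL_int (m α Rl Ru : ℝ) (hm : 0 < m) (h0 : 0 < Rl) (h1 : Rl < Ru) (F : ℝ → ℝ)
    (hF : Measurable F) (C : ℝ) (hC : ∀ x, ‖F x‖ ≤ C) :
    ∫ g in Ioi (0:ℝ), ∫ r in Rl..Ru, m ^ m * g ^ (m - 1) * Real.exp (-m * g) / Real.Gamma m *
      (2 * r / (Ru ^ 2 - Rl ^ 2)) * F (g ^ 2 * r ^ (-(2 * α))) = ∫ x, F x ∂(bcL m α Rl Ru) := by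
  have := bcG_prob m hm
  have := bcU_prob Rl Ru h0 h1
  simp_rw [mul_assoc (_ / Real.Gamma m), intervalIntegral.integral_const_mul,
    bcU_int Rl Ru h0 h1 (fun r => F (_ ^ 2 * r ^ (-(2 * α))))]
  rw [bcG_int m hm]
  unfold bcL
  rw [integral_map (bcX_meas α).aemeasurable hF.aestronglyMeasurable, integral_prod]
  exact Integrable.of_bound (hF.comp (bcX_meas α)).aestronglyMeasurable C
    (ae_of_all _ fun p => hC _)

lemma bcL_cdf (m α Rl Ru : ℝ) (hm : 0 < m) (h0 : 0 < Rl) (h1 : Rl < Ru) (x : ℝ) :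
    compositeCDF m α Rl Ru x = (bcL m α Rl Ru).real (Iio x) := by
  have := bcL_int m α Rl Ru hm h0 h1 ((Iio x).indicator 1) 
    (measurable_one.indicator measurableSet_Iio) 1
    (fun y => by by_cases hy : y ∈ Iio x <;> simp [hy])
  rw [integral_indicator_one measurableSet_Iio] at this
  rw [← this]
  unfold compositeCDF
  simp only [indicator_apply, mem_Iio, Pi.one_apply, mul_ite, mul_one, mul_zero]

lemma bc_half (L₁ L₂ : Measure ℝ) [IsProbabilityMeasure L₁] [IsProbabilityMeasure L₂]
    (h0 : L₁ (Iic 0) = 0) (Φ₁ Φ₂ φ : ℝ → ℝ) (hΦ₁ : ∀ x, Φ₁ x = L₁.real (Iio x))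
    (hΦ₂ : ∀ x, Φ₂ x = L₂.real (Iio x))
    (hφ : ∀ x, 0 < x → HasDerivAt Φ₁ (φ x) x) (t : ℝ → ℝ) (b : ℝ) (hb : 0 ≤ b) :
    ∫ x, ∫ y, ({p : ℝ × ℝ | p.1 < b} ∩ {p | t p.1 ≤ p.2}).indicator (1 : ℝ × ℝ → ℝ) (x, y) ∂L₂ ∂L₁ =
      ∫ x in (0:ℝ)..b, (1 - Φ₂ (t x)) * φ x := by
  rw [← bc_law_int L₁ h0 Φ₁ φ hΦ₁ hφ _ b hb]
  congr 1
  ext x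
  by_cases hx : x < b
  · rw [indicator_of_mem (show x ∈ Iio b from hx), hΦ₂, ← probReal_compl_eq_one_sub measurableSet_Iio,
      ← integral_indicator_one measurableSet_Iio.compl]
    congr 1
    ext y
    simp [indicator_apply, hx]
  · rw [indicator_of_notMem (show x ∉ Iio b from hx)]
    simp [indicator_apply, hx]

/-- Region division with Nakagami-m fading. With `X₁ = g₁²·r₁^{−2α}`
(near node) and `X₂ = g₂²·r₂^{−2α}` (far node) independent, `Φ^A, φ^A` the CDF and
density of `X₁` and `Φ^B, φ^B` those of `X₂`, the probability `p₁` that only the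
instantaneously stronger signal is successfully decoded equals
`∫_0^{𝒩γ/(P_Tξ₂)} (1 − Φ^A(γκx + 𝒩γ/(P_Tξ₁))) φ^B(x) dx
 + ∫_0^{𝒩γ/(P_Tξ₁)} (1 − Φ^B(γx/κ + 𝒩γ/(P_Tξ₂))) φ^A(x) dx`.
`p₁` is expressed as the quadruple integral of the joint density of
`(g₁, r₁, g₂, r₂)` over the event. -/
theorem backcom_fading_region_division_p1
    (m α R₁ R₂ R PT Noise γ ξ₁ ξ₂ κ : ℝ)
    (hm : 0 < m) (hα : 0 < α) (h0 : 0 < R₁) (h12 : R₁ < R₂) (h2R : R₂ < R)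
    (hPT : 0 < PT) (hNoise : 0 < Noise) (hγ : 0 < γ)
    (hξ2 : 0 < ξ₂) (hξ21 : ξ₂ ≤ ξ₁) (hκ : κ = ξ₂ / ξ₁)
    (φA φB : ℝ → ℝ)
    (hφA : ∀ x : ℝ, 0 < x → HasDerivAt (compositeCDF m α R₁ R₂) (φA x) x)
    (hφB : ∀ x : ℝ, 0 < x → HasDerivAt (compositeCDF m α R₂ R) (φB x) x) :
    (∫ g₁ in Set.Ioi (0 : ℝ), ∫ r₁ in R₁..R₂, ∫ g₂ in Set.Ioi (0 : ℝ), ∫ r₂ in R₂..R,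
        if (ξ₂ * (g₂ ^ 2 * r₂ ^ (-(2 * α))) ≤ ξ₁ * (g₁ ^ 2 * r₁ ^ (-(2 * α))) ∧
              γ * (PT * ξ₂ * (g₂ ^ 2 * r₂ ^ (-(2 * α))) + Noise) ≤
                PT * ξ₁ * (g₁ ^ 2 * r₁ ^ (-(2 * α))) ∧
              PT * ξ₂ * (g₂ ^ 2 * r₂ ^ (-(2 * α))) < γ * Noise) ∨
            (ξ₁ * (g₁ ^ 2 * r₁ ^ (-(2 * α))) < ξ₂ * (g₂ ^ 2 * r₂ ^ (-(2 * α))) ∧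
              γ * (PT * ξ₁ * (g₁ ^ 2 * r₁ ^ (-(2 * α))) + Noise) ≤
                PT * ξ₂ * (g₂ ^ 2 * r₂ ^ (-(2 * α))) ∧
              PT * ξ₁ * (g₁ ^ 2 * r₁ ^ (-(2 * α))) < γ * Noise)
        then m ^ m * g₁ ^ (m - 1) * Real.exp (-m * g₁) / Real.Gamma m *
            (2 * r₁ / (R₂ ^ 2 - R₁ ^ 2)) *
            (m ^ m * g₂ ^ (m - 1) * Real.exp (-m * g₂) / Real.Gamma m *
              (2 * r₂ / (R ^ 2 - R₂ ^ 2)))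
        else 0) =
      (∫ x in (0 : ℝ)..(Noise * γ / (PT * ξ₂)),
          (1 - compositeCDF m α R₁ R₂ (γ * κ * x + Noise * γ / (PT * ξ₁))) * φB x) +
        ∫ x in (0 : ℝ)..(Noise * γ / (PT * ξ₁)),
          (1 - compositeCDF m α R₂ R (γ * x / κ + Noise * γ / (PT * ξ₂))) * φA x := by
  
  have hξ1 : 0 < ξ₁ := hξ2.trans_le hξ21
  have hR2 : 0 < R₂ := h0.trans h12
  have hκ0 : 0 < κ := by rw [hκ]; positivity
  have := bcL_prob m α R₁ R₂ hm h0 h12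
  have := bcL_prob m α R₂ R hm hR2 h2R
  set L₁ := bcL m α R₁ R₂ with hL₁
  set L₂ := bcL m α R₂ R with hL₂
  have hz₁ : L₁ (Iic 0) = 0 := bcL_zero m α R₁ R₂ hm h0 h12
  have hz₂ : L₂ (Iic 0) = 0 := bcL_zero m α R₂ R hm hR2 h2R
  let E : Set (ℝ × ℝ) := ({p | ξ₂ * p.2 ≤ ξ₁ * p.1} ∩ ({p | γ * (PT * ξ₂ * p.2 + Noise) ≤ PT * ξ₁ * p.1} ∩
      {p | PT * ξ₂ * p.2 < γ * Noise})) ∪ ({p | ξ₁ * p.1 < ξ₂ * p.2} ∩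
      ({p | γ * (PT * ξ₁ * p.1 + Noise) ≤ PT * ξ₂ * p.2} ∩ {p | PT * ξ₁ * p.1 < γ * Noise}))
  have hE : MeasurableSet E := by
    refine MeasurableSet.union (MeasurableSet.inter ?_ (MeasurableSet.inter ?_ ?_))
      (MeasurableSet.inter ?_ (MeasurableSet.inter ?_ ?_))
    all_goals first
      | exact measurableSet_le (by fun_prop) (by fun_prop)
      | exact measurableSet_lt (by fun_prop) (by fun_prop)
  let e : ℝ × ℝ → ℝ := E.indicator 1
  have he : Measurable e := measurable_one.indicator hE
  have heb : ∀ p, ‖e p‖ ≤ 1 := fun p => by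
    by_cases hp : p ∈ E <;> simp [e, hp]
  have key : ∀ g₁ r₁ : ℝ, (∫ g₂ in Set.Ioi (0 : ℝ), ∫ r₂ in R₂..R,
        if (ξ₂ * (g₂ ^ 2 * r₂ ^ (-(2 * α))) ≤ ξ₁ * (g₁ ^ 2 * r₁ ^ (-(2 * α))) ∧
              γ * (PT * ξ₂ * (g₂ ^ 2 * r₂ ^ (-(2 * α))) + Noise) ≤
                PT * ξ₁ * (g₁ ^ 2 * r₁ ^ (-(2 * α))) ∧
              PT * ξ₂ * (g₂ ^ 2 * r₂ ^ (-(2 * α))) < γ * Noise) ∨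
            (ξ₁ * (g₁ ^ 2 * r₁ ^ (-(2 * α))) < ξ₂ * (g₂ ^ 2 * r₂ ^ (-(2 * α))) ∧
              γ * (PT * ξ₁ * (g₁ ^ 2 * r₁ ^ (-(2 * α))) + Noise) ≤
                PT * ξ₂ * (g₂ ^ 2 * r₂ ^ (-(2 * α))) ∧
              PT * ξ₁ * (g₁ ^ 2 * r₁ ^ (-(2 * α))) < γ * Noise)
        then m ^ m * g₁ ^ (m - 1) * Real.exp (-m * g₁) / Real.Gamma m *
            (2 * r₁ / (R₂ ^ 2 - R₁ ^ 2)) *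
            (m ^ m * g₂ ^ (m - 1) * Real.exp (-m * g₂) / Real.Gamma m *
              (2 * r₂ / (R ^ 2 - R₂ ^ 2)))
        else 0) = m ^ m * g₁ ^ (m - 1) * Real.exp (-m * g₁) / Real.Gamma m *
            (2 * r₁ / (R₂ ^ 2 - R₁ ^ 2)) * ∫ y, e (g₁ ^ 2 * r₁ ^ (-(2 * α)), y) ∂L₂ := by
    intro g₁ r₁
    rw [hL₂, ← bcL_int m α R₂ R hm hR2 h2R (fun y => e (g₁ ^ 2 * r₁ ^ (-(2 * α)), y))
      (he.comp measurable_prodMk_left) 1 (fun y => heb _), ← integral_const_mul]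
    congr 1
    ext g₂
    rw [← intervalIntegral.integral_const_mul]
    congr 1
    ext r₂
    simp only [e, E, indicator_apply, mem_union, mem_inter_iff, mem_ofPred_eq, Pi.one_apply, mul_ite, mul_one, mul_zero]
  simp_rw [key]
  rw [bcL_int m α R₁ R₂ hm h0 h12 (fun x => ∫ y, e (x, y) ∂L₂)
    (he.stronglyMeasurable.integral_prod_right').measurable 1 (fun x => by
      simpa using norm_integral_le_of_norm_le_const (μ := L₂) (ae_of_all _ fun y => heb (x, y))),
    ← hL₁]
  set a₁ := Noise * γ / (PT * ξ₁) with ha₁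
  set a₂ := Noise * γ / (PT * ξ₂) with ha₂
  have hp₁ : ∀ᵐ x ∂L₁, 0 < x := by
    rw [ae_iff]; simpa [Iic] using hz₁
  have hp₂ : ∀ᵐ x ∂L₂, 0 < x := by
    rw [ae_iff]; simpa [Iic] using hz₂
  let S₁ : Set (ℝ × ℝ) := {p | p.1 < a₂} ∩ {p | γ * κ * p.1 + a₁ ≤ p.2}
  let S₂ : Set (ℝ × ℝ) := {p | p.1 < a₁} ∩ {p | γ * p.1 / κ + a₂ ≤ p.2}
  have hS₁ : MeasurableSet S₁ := (measurableSet_lt (by fun_prop) (by fun_prop)).inter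
    (measurableSet_le (by fun_prop) (by fun_prop))
  have hS₂ : MeasurableSet S₂ := (measurableSet_lt (by fun_prop) (by fun_prop)).inter
    (measurableSet_le (by fun_prop) (by fun_prop))
  let s₁ : ℝ × ℝ → ℝ := S₁.indicator 1
  let s₂ : ℝ × ℝ → ℝ := S₂.indicator 1
  have hs₁ : Measurable s₁ := measurable_one.indicator hS₁
  have hs₂ : Measurable s₂ := measurable_one.indicator hS₂
  have hb₁ : ∀ p, ‖s₁ p‖ ≤ 1 := fun p => by
    by_cases hp : p ∈ S₁ <;> simp [s₁, hp]
  have hb₂ : ∀ p, ‖s₂ p‖ ≤ 1 := fun p => by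
    by_cases hp : p ∈ S₂ <;> simp [s₂, hp]
  have hA : ∀ x y : ℝ, (γ * κ * y + a₁ ≤ x ↔ γ * (PT * ξ₂ * y + Noise) ≤ PT * ξ₁ * x) := by
    intro x y
    have : γ * κ * y + a₁ = γ * (PT * ξ₂ * y + Noise) / (PT * ξ₁) := by
      rw [ha₁, hκ]; field_simp
    rw [this, div_le_iff₀ (by positivity), mul_comm x]
  have hB : ∀ x y : ℝ, (γ * x / κ + a₂ ≤ y ↔ γ * (PT * ξ₁ * x + Noise) ≤ PT * ξ₂ * y) := by
    intro x y
    have : γ * x / κ + a₂ = γ * (PT * ξ₁ * x + Noise) / (PT * ξ₂) := by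
      rw [ha₂, hκ]; field_simp
    rw [this, div_le_iff₀ (by positivity), mul_comm y]
  have hA' : ∀ y : ℝ, (y < a₂ ↔ PT * ξ₂ * y < γ * Noise) := by
    intro y
    rw [ha₂, lt_div_iff₀ (by positivity), mul_comm y, mul_comm Noise]
  have hB' : ∀ x : ℝ, (x < a₁ ↔ PT * ξ₁ * x < γ * Noise) := by
    intro y
    rw [ha₁, lt_div_iff₀ (by positivity), mul_comm y, mul_comm Noise]
  have hsplit : ∀ x y : ℝ, 0 < x → 0 < y → e (x, y) = s₁ (y, x) + s₂ (x, y) := by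
    intro x y hx hy
    have hγy : 0 < γ * (PT * ξ₂ * y) := by positivity
    have hγx : 0 < γ * (PT * ξ₁ * x) := by positivity
    have c1 : (y, x) ∈ S₁ → ξ₂ * y < ξ₁ * x := by
      rintro ⟨h1, h2⟩
      have h1 := (hA' y).1 h1
      have h2 := (hA x y).1 h2
      refine lt_of_mul_lt_mul_left ?_ hPT.le
      linarith
    have c2 : (x, y) ∈ S₂ → ξ₁ * x < ξ₂ * y := by
      rintro ⟨h1, h2⟩
      have h1 := (hB' x).1 h1
      have h2 := (hB x y).1 h2
      refine lt_of_mul_lt_mul_left ?_ hPT.le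
      linarith
    have hEe : (x, y) ∈ E ↔ ((y, x) ∈ S₁ ∨ (x, y) ∈ S₂) := by
      constructor
      · rintro (⟨_, h1, h2⟩ | ⟨_, h1, h2⟩)
        · exact Or.inl ⟨(hA' y).2 h2, (hA x y).2 h1⟩
        · exact Or.inr ⟨(hB' x).2 h2, (hB x y).2 h1⟩
      · rintro (h | h)
        · exact Or.inl ⟨(c1 h).le, (hA x y).1 h.2, (hA' y).1 h.1⟩
        · exact Or.inr ⟨c2 h, (hB x y).1 h.2, (hB' x).1 h.1⟩
    by_cases q1 : (y, x) ∈ S₁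
    · have q2 : (x, y) ∉ S₂ := fun q => lt_asymm (c1 q1) (c2 q)
      simp [e, s₁, s₂, q1, q2, hEe]
    · by_cases q2 : (x, y) ∈ S₂ <;> simp [e, s₁, s₂, q1, q2, hEe]
  have hi₁ : Integrable (fun p : ℝ × ℝ => s₁ (p.2, p.1)) (L₁.prod L₂) :=
    Integrable.of_bound (hs₁.comp measurable_swap).aestronglyMeasurable 1 (ae_of_all _ fun p => hb₁ _)
  have hi₂ : Integrable s₂ (L₁.prod L₂) :=
    Integrable.of_bound hs₂.aestronglyMeasurable 1 (ae_of_all _ fun p => hb₂ _)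
  have hstep : ∫ x, ∫ y, e (x, y) ∂L₂ ∂L₁ = ∫ x, ∫ y, (s₁ (y, x) + s₂ (x, y)) ∂L₂ ∂L₁ := by
    refine integral_congr_ae ?_
    filter_upwards [hp₁] with x hx
    refine integral_congr_ae ?_
    filter_upwards [hp₂] with y hy
    exact hsplit x y hx hy
  rw [hstep, integral_integral_add hi₁ hi₂, integral_integral_swap hi₁]
  congr 1
  · exact bc_half L₂ L₁ hz₂ _ _ φB (bcL_cdf m α R₂ R hm hR2 h2R) (bcL_cdf m α R₁ R₂ hm h0 h12) hφB
      (fun y => γ * κ * y + a₁) a₂ (by positivity)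
  · exact bc_half L₁ L₂ hz₁ _ _ φA (bcL_cdf m α R₁ R₂ hm h0 h12) (bcL_cdf m α R₂ R hm hR2 h2R) hφA
      (fun x => γ * x / κ + a₂) a₁ (by positivity)
end

section
/- Fix m > 0, α > 0, 0 < R₁ < R, P_T > 0, 𝒩 > 0, γ > 0, reflection coefficients 0 < ξ₂ ≤ ξ₁, κ = ξ₂/ξ₁, and a grouping threshold β̃ with β̃ > 𝒩·γ/(P_T·ξ₂). Let X₁ and X₂ be independent and identically distributed as g²·r^{−2α}, where g has Gamma density m^m·g^{m−1}·e^{−m·g}/Γ(m) and r is independent with density 2r/(R² − R₁²) on [R₁, R]; write Φ for their common CDF and φ for their common density, and assume 0 < Φ(β̃) < 1. Define p₂ = P( P_T·ξ₁·X₁ ≥ γ·(P_T·ξ₂·X₂ + 𝒩) and P_T·ξ₂·X₂ ≥ γ·𝒩 │ X₁ ≥ β̃ and X₂ < β̃ ), and set L = min{ β̃, max{ 𝒩γ/(P_Tξ₂), β̃/(γκ) − 𝒩/(P_Tξ₂) } }. Then p₂ = ∫_{L}^{β̃} ( 1 − (Φ(γκx + 𝒩γ/(P_Tξ₁)) − Φ(β̃))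 / (1 − Φ(β̃)) )·( φ(x)/Φ(β̃) ) dx + ( Φ(L) − Φ(𝒩γ/(P_Tξ₂)) ) / Φ(β̃). -/
open MeasureTheory Set Real

lemma bp_density (μ : Measure ℝ) [IsProbabilityMeasure μ] (φ : ℝ → ℝ)
    (hφ : ∀ x : ℝ, 0 < x → HasDerivAt (fun x => μ.real (Iio x)) (φ x) x)
    (L b : ℝ) (hL : 0 < L) (hLb : L ≤ b) (h : ℝ → ℝ) :
    ∫ x in Ico L b, h x ∂μ = ∫ x in L..b, h x * φ x := by
  set Φ : ℝ → ℝ := fun x => μ.real (Iio x) with hΦ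
  have hmono : Monotone Φ := fun x y hxy => measureReal_mono (Iio_subset_Iio hxy)
  have hd : ∀ x, 0 < x → φ x = deriv Φ x := fun x hx => (hφ x hx).deriv.symm
  have hnn : ∀ x, 0 ≤ deriv Φ x := fun x => hmono.deriv_nonneg
  have hderiv : ∀ x, 0 < x → HasDerivAt Φ (deriv Φ x) x := fun x hx => hd x hx ▸ hφ x hx
  have hint : ∀ s t, 0 < s → s ≤ t → IntervalIntegrable (deriv Φ) volume s t := by
    intro s t hs hst
    apply intervalIntegral.intervalIntegrable_deriv_of_nonneg (g := Φ)
    · intro x hx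
      rw [uIcc_of_le hst] at hx
      exact (hderiv x (hs.trans_le hx.1)).continuousAt.continuousWithinAt
    · intro x hx
      rw [min_eq_left hst] at hx
      exact hderiv x (hs.trans hx.1)
    · intro x _; exact hnn x
  have hftc : ∀ s t, 0 < s → s ≤ t → ∫ x in s..t, deriv Φ x = Φ t - Φ s := by
    intro s t hs hst
    apply intervalIntegral.integral_eq_sub_of_hasDerivAt _ (hint s t hs hst)
    intro x hx
    rw [uIcc_of_le hst] at hx
    exact hderiv x (hs.trans_le hx.1)
  have hIco : ∀ s t, s ≤ t → μ.real (Ico s t) = Φ t - Φ s := by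
    intro s t hst
    have hd' : Ico s t = Iio t \ Iio s := by ext x; simp
    rw [hd', measureReal_sdiff (Iio_subset_Iio hst) measurableSet_Iio]
  have hintI : IntegrableOn (deriv Φ) (Ico L b) := by
    have := (intervalIntegrable_iff_integrableOn_Ico_of_le hLb).1 (hint L b hL hLb)
    exact this
  have hmeas : Measurable (deriv Φ) := measurable_deriv Φ
  have key : μ.restrict (Ico L b) =
      (volume.restrict (Ico L b)).withDensity (fun x => ENNReal.ofReal (deriv Φ x)) := by
    have : IsFiniteMeasure ((volume.restrict (Ico L b)).withDensity
        (fun x => ENNReal.ofReal (deriv Φ x))) := isFiniteMeasure_withDensity_ofReal hintI.2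
    apply Measure.ext_of_Ico
    intro s t hst
    rw [Measure.restrict_apply measurableSet_Ico, withDensity_apply _ measurableSet_Ico,
      Measure.restrict_restrict measurableSet_Ico, Ico_inter_Ico]
    rcases le_total (max s L) (min t b) with hle | hle
    · have hpos : 0 < max s L := lt_max_of_lt_right hL
      have h1 := hint _ _ hpos hle
      rw [intervalIntegrable_iff_integrableOn_Ico_of_le hle] at h1
      rw [← ofReal_integral_eq_lintegral_ofReal h1 (Filter.Eventually.of_forall hnn),
        integral_Ico_eq_integral_Ioc, ← intervalIntegral.integral_of_le hle, hftc _ _ hpos hle,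
        ← hIco _ _ hle, ofReal_measureReal]
    · rw [Ico_eq_empty_of_le hle]; simp
  rw [key, integral_withDensity_eq_integral_toReal_smul (by fun_prop) (by simp),
    intervalIntegral.integral_of_le hLb, ← integral_Ico_eq_integral_Ioc]
  apply setIntegral_congr_fun measurableSet_Ico
  intro x hx
  simp only [smul_eq_mul]
  rw [ENNReal.toReal_ofReal (hnn x), hd x (hL.trans_le hx.1), mul_comm]

lemma bp_gamma (m : ℝ) (hm : 0 < m) :
    IntegrableOn (fun g => m ^ m * g ^ (m - 1) * Real.exp (-m * g) / Real.Gamma m) (Ioi 0) ∧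
    ∫ g in Ioi (0:ℝ), m ^ m * g ^ (m - 1) * Real.exp (-m * g) / Real.Gamma m = 1 := by
  have h1 : ∫ g in Ioi (0:ℝ), m ^ m * g ^ (m - 1) * Real.exp (-m * g) / Real.Gamma m = 1 := by
    have h := Real.integral_rpow_mul_exp_neg_mul_Ioi hm hm
    have e : ∀ g : ℝ, m ^ m * g ^ (m - 1) * Real.exp (-m * g) / Real.Gamma m =
      (m ^ m / Real.Gamma m) * (g ^ (m - 1) * Real.exp (-(m * g))) := by
      intro g; rw [neg_mul]; ring
    simp_rw [e]
    rw [integral_const_mul, h]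
    have := Real.Gamma_pos_of_pos hm
    have h2 : 0 < m ^ m := Real.rpow_pos_of_pos hm m
    rw [one_div, Real.inv_rpow hm.le]
    field_simp
  refine ⟨?_, h1⟩
  by_contra h
  rw [integral_undef h] at h1
  exact zero_ne_one h1

lemma bp_rad (R₁ R : ℝ) (h0 : 0 < R₁) (h1R : R₁ < R) :
    ∫ r in Ioc R₁ R, 2 * r / (R ^ 2 - R₁ ^ 2) = 1 := by
  rw [← intervalIntegral.integral_of_le h1R.le]
  have : R ^ 2 - R₁ ^ 2 ≠ 0 := by nlinarith
  rw [intervalIntegral.integral_div, intervalIntegral.integral_const_mul, integral_id]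
  field_simp

lemma bp_model (m α R₁ R : ℝ) (hm : 0 < m) (h0 : 0 < R₁) (h1R : R₁ < R) :
    ∃ μ : Measure ℝ, IsProbabilityMeasure μ ∧ ∀ f : ℝ → ℝ, Measurable f →
      (∀ x, |f x| ≤ 1) →
      ∫ g in Ioi (0:ℝ), ∫ r in R₁..R, f (g ^ 2 * r ^ (-(2 * α))) *
        (m ^ m * g ^ (m - 1) * Real.exp (-m * g) / Real.Gamma m * (2 * r / (R ^ 2 - R₁ ^ 2)))
       = ∫ x, f x ∂μ := by
  set w : ℝ → ℝ := fun g => m ^ m * g ^ (m - 1) * Real.exp (-m * g) / Real.Gamma m with hw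
  set u : ℝ → ℝ := fun r => 2 * r / (R ^ 2 - R₁ ^ 2) with hu
  have hwm : Measurable w := by fun_prop
  have hum : Measurable u := by fun_prop
  have hw0 : ∀ g ∈ Ioi (0:ℝ), 0 ≤ w g := by
    intro g hg
    have := Real.Gamma_pos_of_pos hm
    have : 0 < g := hg
    simp only [hw]; positivity
  have hu0 : ∀ r ∈ Ioc R₁ R, 0 ≤ u r := by
    intro r hr
    have h1 : 0 < R ^ 2 - R₁ ^ 2 := by nlinarith
    have : 0 < r := h0.trans hr.1
    simp only [hu]; positivity
  set ν := (volume.restrict (Ioi (0:ℝ))).withDensity (fun g => ENNReal.ofReal (w g)) with hν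
  set ρ := (volume.restrict (Ioc R₁ R)).withDensity (fun g => ENNReal.ofReal (u g)) with hρ
  have hνp : IsProbabilityMeasure ν := by
    constructor
    rw [hν, withDensity_apply _ MeasurableSet.univ, Measure.restrict_univ,
      ← ofReal_integral_eq_lintegral_ofReal (bp_gamma m hm).1
        (ae_restrict_of_forall_mem measurableSet_Ioi hw0), (bp_gamma m hm).2]
    simp
  have hρp : IsProbabilityMeasure ρ := by
    constructor
    have hi : IntegrableOn u (Ioc R₁ R) := by
      by_contra h
      have := bp_rad R₁ R h0 h1R
      rw [integral_undef h] at this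
      exact zero_ne_one this
    rw [hρ, withDensity_apply _ MeasurableSet.univ, Measure.restrict_univ,
      ← ofReal_integral_eq_lintegral_ofReal hi
        (ae_restrict_of_forall_mem measurableSet_Ioc hu0), bp_rad R₁ R h0 h1R]
    simp
  have hX : Measurable (fun p : ℝ × ℝ => p.1 ^ 2 * p.2 ^ (-(2 * α))) := by fun_prop
  refine ⟨(ν.prod ρ).map (fun p => p.1 ^ 2 * p.2 ^ (-(2 * α))),
    Measure.isProbabilityMeasure_map hX.aemeasurable, ?_⟩
  intro f hf hb
  rw [integral_map hX.aemeasurable hf.aestronglyMeasurable, integral_prod]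
  · conv_rhs => rw [hν]
    rw [integral_withDensity_eq_integral_toReal_smul (by fun_prop) (by simp)]
    apply setIntegral_congr_fun measurableSet_Ioi
    intro g hg
    simp only [smul_eq_mul]
    rw [ENNReal.toReal_ofReal (hw0 g hg), hρ,
      integral_withDensity_eq_integral_toReal_smul (by fun_prop) (by simp),
      intervalIntegral.integral_of_le h1R.le, ← integral_const_mul]
    apply setIntegral_congr_fun measurableSet_Ioc
    intro r hr
    simp only [smul_eq_mul]
    rw [ENNReal.toReal_ofReal (hu0 r hr)]
    ring
  · apply Integrable.of_bound (C := 1) (hf.comp hX).aestronglyMeasurable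
    exact Filter.Eventually.of_forall fun p => hb _

lemma bp_main (μ : Measure ℝ) [IsProbabilityMeasure μ] (Φ φ : ℝ → ℝ)
    (hΦ : ∀ x, Φ x = μ.real (Iio x))
    (hφ : ∀ x : ℝ, 0 < x → HasDerivAt Φ (φ x) x)
    (PT Noise γ ξ₁ ξ₂ κ βt : ℝ)
    (hPT : 0 < PT) (hNoise : 0 < Noise) (hγ : 0 < γ)
    (hξ2 : 0 < ξ₂) (hξ21 : ξ₂ ≤ ξ₁) (hκ : κ = ξ₂ / ξ₁)
    (hβ : Noise * γ / (PT * ξ₂) < βt) (L : ℝ)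
    (hL : L = min βt (max (Noise * γ / (PT * ξ₂)) (βt / (γ * κ) - Noise / (PT * ξ₂)))) :
    ∫ x, ∫ y, (if βt ≤ x ∧ y < βt ∧ γ * (PT * ξ₂ * y + Noise) ≤ PT * ξ₁ * x ∧
        γ * Noise ≤ PT * ξ₂ * y then (1:ℝ) else 0) ∂μ ∂μ =
    (∫ x in L..βt, (1 - Φ (γ * κ * x + Noise * γ / (PT * ξ₁))) * φ x) +
      (1 - Φ βt) * (Φ L - Φ (Noise * γ / (PT * ξ₂))) := by
  have hξ1 : 0 < ξ₁ := hξ2.trans_le hξ21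
  have hκ0 : 0 < κ := by rw [hκ]; positivity
  have hΦe : Φ = fun x => μ.real (Iio x) := funext hΦ
  have hmono : Monotone Φ := by
    rw [hΦe]; exact fun x y hxy => measureReal_mono (Iio_subset_Iio hxy)
  set a := Noise * γ / (PT * ξ₂) with ha
  set c := Noise * γ / (PT * ξ₁) with hc
  have ha0 : 0 < a := by positivity
  have haL : a ≤ L := by rw [hL]; exact le_min hβ.le (le_max_left _ _)
  have hLb : L ≤ βt := by rw [hL]; exact min_le_left _ _
  have hE1 : ∀ x y, γ * (PT * ξ₂ * y + Noise) ≤ PT * ξ₁ * x ↔ γ * κ * y + c ≤ x := by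
    intro x y
    have : γ * κ * y + c = γ * (PT * ξ₂ * y + Noise) / (PT * ξ₁) := by
      rw [hκ, hc]; field_simp
    rw [this, div_le_iff₀ (by positivity), mul_comm x]
  have hE2 : ∀ y, γ * Noise ≤ PT * ξ₂ * y ↔ a ≤ y := by
    intro y
    rw [ha, div_le_iff₀ (by positivity), mul_comm γ, mul_comm y]
  have hE3 : ∀ y, βt / (γ * κ) - Noise / (PT * ξ₂) ≤ y ↔ βt ≤ γ * κ * y + c := by
    intro y
    have : Noise / (PT * ξ₂) = c / (γ * κ) := by rw [hκ, hc]; field_simp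
    rw [this, ← sub_div, div_le_iff₀ (by positivity), sub_le_iff_le_add, mul_comm y]
  simp_rw [hE1, hE2]
  have hIci : ∀ x, μ.real (Ici x) = 1 - Φ x := by
    intro x
    rw [hΦ, ← compl_Iio, probReal_compl_eq_one_sub measurableSet_Iio]
  have hset : MeasurableSet {p : ℝ × ℝ | βt ≤ p.1 ∧ p.2 < βt ∧ γ * κ * p.2 + c ≤ p.1 ∧ a ≤ p.2} := by
    simp only [setOf_and]
    refine MeasurableSet.inter ?_ (MeasurableSet.inter ?_ (MeasurableSet.inter ?_ ?_))
    · exact measurableSet_le (by fun_prop) (by fun_prop)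
    · exact measurableSet_lt (by fun_prop) (by fun_prop)
    · exact measurableSet_le (by fun_prop) (by fun_prop)
    · exact measurableSet_le (by fun_prop) (by fun_prop)
  rw [integral_integral_swap]
  swap
  · apply Integrable.of_bound (C := 1)
    · exact (Measurable.ite hset measurable_const measurable_const).aestronglyMeasurable
    · refine Filter.Eventually.of_forall fun p => ?_
      simp only [Function.uncurry]
      split_ifs <;> simp
  have hin : ∀ y, ∫ x, (if βt ≤ x ∧ y < βt ∧ γ * κ * y + c ≤ x ∧ a ≤ y then (1:ℝ) else 0) ∂μ =
      (Ico a βt).indicator (fun y => 1 - Φ (max βt (γ * κ * y + c))) y := by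
    intro y
    by_cases hy : y ∈ Ico a βt
    · rw [indicator_of_mem hy, ← hIci, ← integral_indicator_one measurableSet_Ici]
      congr 1
      ext x
      simp only [indicator, mem_Ici, max_le_iff, Pi.one_apply]
      have := hy.1
      have := hy.2
      congr 1
      simp only [eq_iff_iff]
      tauto
    · rw [indicator_of_notMem hy]
      have : ∀ x, ¬ (βt ≤ x ∧ y < βt ∧ γ * κ * y + c ≤ x ∧ a ≤ y) :=
        fun x h => hy ⟨h.2.2.2, h.2.1⟩
      simp [this]
  simp_rw [hin]
  rw [integral_indicator measurableSet_Ico, ← Ico_union_Ico_eq_Ico haL hLb]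
  have hm : Measurable (fun y => 1 - Φ (max βt (γ * κ * y + c))) :=
    measurable_const.sub (hmono.measurable.comp (by fun_prop))
  have hi : Integrable (fun y => 1 - Φ (max βt (γ * κ * y + c))) μ := by
    apply Integrable.of_bound (C := 1) hm.aestronglyMeasurable
    refine Filter.Eventually.of_forall fun y => ?_
    rw [← hIci, Real.norm_of_nonneg measureReal_nonneg]
    exact measureReal_le_one
  rw [setIntegral_union (Ico_disjoint_Ico_same) measurableSet_Ico hi.integrableOn hi.integrableOn]
  rw [← bp_density μ φ (hΦe ▸ hφ) L βt (ha0.trans_le haL) hLb, add_comm]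
  congr 1
  · apply setIntegral_congr_fun measurableSet_Ico
    intro y hy
    have h1 : βt / (γ * κ) - Noise / (PT * ξ₂) ≤ y := by
      have h2 := hy.1
      rw [hL, min_le_iff] at h2
      rcases h2 with h2 | h2
      · exact absurd hy.2 (not_lt.2 h2)
      · exact (le_max_right _ _).trans h2
    simp only
    rw [max_eq_right ((hE3 y).1 h1)]
  · have : ∫ y in Ico a L, (1 - Φ (max βt (γ * κ * y + c))) ∂μ = ∫ y in Ico a L, (1 - Φ βt) ∂μ := by
      apply setIntegral_congr_fun measurableSet_Ico
      intro y hy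
      have h2 := hy.2
      rw [hL, lt_min_iff, lt_max_iff] at h2
      have h3 : y < βt / (γ * κ) - Noise / (PT * ξ₂) := by
        rcases h2.2 with h | h
        · exact absurd hy.1 (not_le.2 h)
        · exact h
      have h4 : γ * κ * y + c < βt := by
        rw [← not_le, ← hE3, not_le]; exact h3
      simp only
      rw [max_eq_left h4.le]
    rw [this, setIntegral_const, smul_eq_mul, mul_comm]
    congr 1
    have hd' : Ico a L = Iio L \ Iio a := by ext x; simp
    rw [hd', measureReal_sdiff (Iio_subset_Iio haL) measurableSet_Iio, hΦ, hΦ]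

/-- Power division approach under Nakagami-m fading. `X₁ = g₁²·r₁^{−2α}`
and `X₂ = g₂²·r₂^{−2α}` are i.i.d. composite variables on the annulus `[R₁, R]` with
common CDF `Φ = compositeCDF m α R₁ R` and density `φ`. The conditional probability
`p₂` that, given the grouping `X₁ ≥ β̃` and `X₂ < β̃`, the high-group node's SINR and
the low-group node's SNR both meet `γ` — expressed as the quadruple integral of the
joint density over the event (grouping and success), divided by the probability
`(1 − Φ(β̃))·Φ(β̃)` of the grouping — equals the stated expression with
`L = min{β̃, max{𝒩γ/(P_Tξ₂), β̃/(γκ) − 𝒩/(P_Tξ₂)}}`. -/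
theorem backcom_power_division_p2
    (m α R₁ R PT Noise γ ξ₁ ξ₂ κ βt : ℝ)
    (hm : 0 < m) (hα : 0 < α) (h0 : 0 < R₁) (h1R : R₁ < R)
    (hPT : 0 < PT) (hNoise : 0 < Noise) (hγ : 0 < γ)
    (hξ2 : 0 < ξ₂) (hξ21 : ξ₂ ≤ ξ₁) (hκ : κ = ξ₂ / ξ₁)
    (hβ : Noise * γ / (PT * ξ₂) < βt)
    (hΦpos : 0 < compositeCDF m α R₁ R βt) (hΦlt : compositeCDF m α R₁ R βt < 1)
    (φ : ℝ → ℝ)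
    (hφ : ∀ x : ℝ, 0 < x → HasDerivAt (compositeCDF m α R₁ R) (φ x) x)
    (L : ℝ)
    (hL : L = min βt (max (Noise * γ / (PT * ξ₂)) (βt / (γ * κ) - Noise / (PT * ξ₂)))) :
    (∫ g₁ in Set.Ioi (0 : ℝ), ∫ r₁ in R₁..R, ∫ g₂ in Set.Ioi (0 : ℝ), ∫ r₂ in R₁..R,
        if βt ≤ g₁ ^ 2 * r₁ ^ (-(2 * α)) ∧ g₂ ^ 2 * r₂ ^ (-(2 * α)) < βt ∧
            γ * (PT * ξ₂ * (g₂ ^ 2 * r₂ ^ (-(2 * α))) + Noise) ≤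
              PT * ξ₁ * (g₁ ^ 2 * r₁ ^ (-(2 * α))) ∧
            γ * Noise ≤ PT * ξ₂ * (g₂ ^ 2 * r₂ ^ (-(2 * α)))
        then m ^ m * g₁ ^ (m - 1) * Real.exp (-m * g₁) / Real.Gamma m *
            (2 * r₁ / (R ^ 2 - R₁ ^ 2)) *
            (m ^ m * g₂ ^ (m - 1) * Real.exp (-m * g₂) / Real.Gamma m *
              (2 * r₂ / (R ^ 2 - R₁ ^ 2)))
        else 0) /
      ((1 - compositeCDF m α R₁ R βt) * compositeCDF m α R₁ R βt) =
      (∫ x in L..βt,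
          (1 - (compositeCDF m α R₁ R (γ * κ * x + Noise * γ / (PT * ξ₁)) -
              compositeCDF m α R₁ R βt) / (1 - compositeCDF m α R₁ R βt)) *
            (φ x / compositeCDF m α R₁ R βt)) +
        (compositeCDF m α R₁ R L - compositeCDF m α R₁ R (Noise * γ / (PT * ξ₂))) /
          compositeCDF m α R₁ R βt := by
  obtain ⟨μ, hμ, hmodel⟩ := bp_model m α R₁ R hm h0 h1R
  have hΦ : ∀ x, compositeCDF m α R₁ R x = μ.real (Iio x) := by
    intro x
    have hmeas : Measurable (fun y => (Iio x).indicator (1 : ℝ → ℝ) y) :=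
      measurable_one.indicator measurableSet_Iio
    rw [← integral_indicator_one measurableSet_Iio, ← hmodel _ hmeas ?_]
    · unfold compositeCDF
      congr 1
      ext g
      congr 1
      ext r
      simp only [indicator, mem_Iio, Pi.one_apply, ite_mul, one_mul, zero_mul]
    · intro y
      simp only [indicator]
      split_ifs <;> simp
  have hmain := bp_main μ _ φ hΦ hφ PT Noise γ ξ₁ ξ₂ κ βt hPT hNoise hγ hξ2 hξ21 hκ hβ L hL
  set Φ := compositeCDF m α R₁ R with hΦdef
  have hset : MeasurableSet {p : ℝ × ℝ | βt ≤ p.1 ∧ p.2 < βt ∧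
      γ * (PT * ξ₂ * p.2 + Noise) ≤ PT * ξ₁ * p.1 ∧ γ * Noise ≤ PT * ξ₂ * p.2} := by
    simp only [setOf_and]
    refine MeasurableSet.inter ?_ (MeasurableSet.inter ?_ (MeasurableSet.inter ?_ ?_))
    · exact measurableSet_le (by fun_prop) (by fun_prop)
    · exact measurableSet_lt (by fun_prop) (by fun_prop)
    · exact measurableSet_le (by fun_prop) (by fun_prop)
    · exact measurableSet_le (by fun_prop) (by fun_prop)
  have hem : Measurable (fun p : ℝ × ℝ => if βt ≤ p.1 ∧ p.2 < βt ∧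
      γ * (PT * ξ₂ * p.2 + Noise) ≤ PT * ξ₁ * p.1 ∧ γ * Noise ≤ PT * ξ₂ * p.2
      then (1:ℝ) else 0) := Measurable.ite hset measurable_const measurable_const
  set e : ℝ → ℝ → ℝ := fun x y => if βt ≤ x ∧ y < βt ∧
      γ * (PT * ξ₂ * y + Noise) ≤ PT * ξ₁ * x ∧ γ * Noise ≤ PT * ξ₂ * y
      then (1:ℝ) else 0 with he
  have he1 : ∀ x y, |e x y| ≤ 1 := by
    intro x y
    simp only [he]
    split_ifs <;> simp
  have hF : Measurable (fun x => ∫ y, e x y ∂μ) :=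
    (hem.stronglyMeasurable.integral_prod_right (ν := μ)).measurable
  have hF1 : ∀ x, |∫ y, e x y ∂μ| ≤ 1 := by
    intro x
    have := norm_integral_le_of_norm_le_const (μ := μ) (f := e x) (C := 1)
      (Filter.Eventually.of_forall (he1 x))
    simpa using this
  have hquad : (∫ g₁ in Set.Ioi (0 : ℝ), ∫ r₁ in R₁..R, ∫ g₂ in Set.Ioi (0 : ℝ), ∫ r₂ in R₁..R,
        if βt ≤ g₁ ^ 2 * r₁ ^ (-(2 * α)) ∧ g₂ ^ 2 * r₂ ^ (-(2 * α)) < βt ∧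
            γ * (PT * ξ₂ * (g₂ ^ 2 * r₂ ^ (-(2 * α))) + Noise) ≤
              PT * ξ₁ * (g₁ ^ 2 * r₁ ^ (-(2 * α))) ∧
            γ * Noise ≤ PT * ξ₂ * (g₂ ^ 2 * r₂ ^ (-(2 * α)))
        then m ^ m * g₁ ^ (m - 1) * Real.exp (-m * g₁) / Real.Gamma m *
            (2 * r₁ / (R ^ 2 - R₁ ^ 2)) *
            (m ^ m * g₂ ^ (m - 1) * Real.exp (-m * g₂) / Real.Gamma m *
              (2 * r₂ / (R ^ 2 - R₁ ^ 2)))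
        else 0) = ∫ x, ∫ y, e x y ∂μ ∂μ := by
    rw [← hmodel _ hF hF1]
    congr 1
    ext g₁
    congr 1
    ext r₁
    rw [← hmodel (e (g₁ ^ 2 * r₁ ^ (-(2 * α)))) (hem.comp measurable_prodMk_left) (he1 _),
      ← integral_mul_const]
    congr 1
    ext g₂
    rw [← intervalIntegral.integral_mul_const]
    congr 1
    ext r₂
    simp only [he]
    split_ifs
    · ring
    · ring
  rw [hquad, hmain]
  have hne : 1 - Φ βt ≠ 0 := by linarith
  have hne' : Φ βt ≠ 0 := hΦpos.ne'
  have hfun : ∀ x, (1 - (Φ (γ * κ * x + Noise * γ / (PT * ξ₁)) - Φ βt) / (1 - Φ βt)) *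
      (φ x / Φ βt) = ((1 - Φ (γ * κ * x + Noise * γ / (PT * ξ₁))) * φ x) /
        ((1 - Φ βt) * Φ βt) := by
    intro x
    field_simp
    ring
  simp_rw [hfun]
  rw [intervalIntegral.integral_div, add_div, mul_div_mul_left _ _ hne]
end
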